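/- There exist absolute constants C1, C2, C3 > 0 with the following property. Let p ≥ 16 be a prime and let γ ∈ F_p^* have multiplicative order at least exp(C1·log p / log log p). Consider the lazy Markov chain (X_n) on F_p^* started from an arbitrary fixed X_0 ∈ F_p^*, whose one-step transition from a state x is: stay at x with probability 1/2, move to f_*(x)·γ with probability 1/4, and move to f_*(x)·γ^{-1} with probability 1/4. Then for every c > 0 and every integer n ≥ c·exp(log p / log log p), one has (1/2)·max_{A ⊆ F_p^*} |P(X_n ∈ A) − |A|/(p−1)| ≤ C2·e^{−C3·c}. -/

import Mathlib

open scoped BigOperators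

/-- The distribution of the Markov chain after `n` steps: the `n`-fold bind of
`step` applied to the point mass at `x0`. -/
noncomputable def walkDist {S : Type*} (step : S → PMF S) (x0 : S) : ℕ → PMF S :=
  fun n => (fun μ : PMF S => μ.bind step)^[n] (PMF.pure x0)

namespace MixingProof

section
open Polynomial

lemma pig (p : ℕ) [Fact p.Prime] (t : ZMod p) (D H : ℕ) (h : p < H ^ D) :
    ∃ Q : ℤ[X], Q ≠ 0 ∧ Q.degree < D ∧ (∀ i, |Q.coeff i| < H) ∧ aeval t Q = 0 := by
  classical
  have hH : 0 < H ∨ D = 0 := by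
    rcases Nat.eq_zero_or_pos H with h0 | h0
    · subst h0
      rcases Nat.eq_zero_or_pos D with h1 | h1
      · exact Or.inr h1
      · rw [Nat.zero_pow h1] at h; omega
    · exact Or.inl h0
  let F : (Fin D → Fin H) → ZMod p := fun c => ∑ i : Fin D, ((c i : ℕ) : ZMod p) * t ^ (i : ℕ)
  obtain ⟨c, c', hne, heq⟩ : ∃ c c', c ≠ c' ∧ F c = F c' := by
    apply Fintype.exists_ne_map_eq_of_card_lt
    simp [ZMod.card]
    exact h
  let Q : ℤ[X] := ∑ i : Fin D, C (((c i : ℕ) : ℤ) - ((c' i : ℕ) : ℤ)) * X ^ (i : ℕ)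
  have hc : ∀ i : Fin D, Q.coeff i = ((c i : ℕ) : ℤ) - ((c' i : ℕ) : ℤ) := by
    intro i
    simp only [Q, finsetSum_coeff, coeff_C_mul, coeff_X_pow]
    rw [Finset.sum_eq_single i]
    · simp
    · intro j _ hj
      have : (i : ℕ) ≠ j := fun h => hj (Fin.ext h.symm)
      simp [this]
    · simp
  have hdeg : Q.degree < D := by
    apply degree_sum_fin_lt
  refine ⟨Q, ?_, hdeg, ?_, ?_⟩
  · intro h0
    apply hne
    funext i
    have := hc i
    rw [h0] at this
    simp at this
    apply Fin.ext
    omega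
  · intro i
    by_cases hi : i < D
    · have := hc ⟨i, hi⟩
      simp only at this
      rw [this, abs_lt]
      have h1 := (c ⟨i, hi⟩).2
      have h2 := (c' ⟨i, hi⟩).2
      constructor <;> omega
    · rw [coeff_eq_zero_of_degree_lt (lt_of_lt_of_le hdeg (by exact_mod_cast not_lt.mp hi))]
      rcases hH with h1 | h1
      · simpa using h1
      · subst h1; simp at h; exact absurd h (Fact.out : p.Prime).ne_zero
  · simp only [Q, map_sum, map_mul, map_pow, aeval_X, aeval_C]
    have : F c - F c' = 0 := by rw [heq, sub_self]
    simp only [F, ← Finset.sum_sub_distrib, ← sub_mul] at this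
    simpa using this

/-- small combinations vanish exactly -/
lemma exact_rel (p : ℕ) (s : ℕ → ℤ) (D H : ℕ) (c : ℕ → ℤ) (hc : ∀ i, |c i| ≤ H) (e : ℕ → ℕ)
    (hs : ∀ i < D, |s (e i)| * (D * H : ℕ) < p) (hp : 0 < p)
    (h : ((∑ i ∈ Finset.range D, c i * s (e i) : ℤ) : ZMod p) = 0) :
    ∑ i ∈ Finset.range D, c i * s (e i) = 0 := by
  rw [ZMod.intCast_zmod_eq_zero_iff_dvd] at h
  apply Int.eq_zero_of_abs_lt_dvd h
  rcases Nat.eq_zero_or_pos D with h0 | hD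
  · subst h0; simpa using hp
  have h1 : |∑ i ∈ Finset.range D, c i * s (e i)| * D < p * D := by
    calc _ ≤ (∑ i ∈ Finset.range D, |c i * s (e i)|) * D := by
          gcongr; exact Finset.abs_sum_le_sum_abs _ _
      _ = ∑ i ∈ Finset.range D, |c i * s (e i)| * D := by rw [Finset.sum_mul]
      _ < ∑ i ∈ Finset.range D, (p : ℤ) := by
          apply Finset.sum_lt_sum_of_nonempty (by simpa using hD.ne')
          intro i hi
          have := hs i (by simpa using hi)
          rw [abs_mul]
          push_cast at this
          calc |c i| * |s (e i)| * D ≤ H * |s (e i)| * D := by gcongr; exact hc i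
            _ < p := by linarith
      _ = p * D := by simp [mul_comm]
  exact lt_of_mul_lt_mul_right h1 (by positivity)

lemma exists_lam (s : ℕ → ℤ) (P : ℤ[X]) (hP : P ≠ 0) (L : ℕ)
    (hs : ∀ k, k + P.natDegree < L →
      ∑ i ∈ Finset.range (P.natDegree + 1), P.coeff i * s (k + i) = 0) :
    ∃ Λ : ℚ[X] →ₗ[ℚ] ℚ, (∀ R, Λ (R * P.map (Int.castRingHom ℚ)) = 0) ∧
      (∀ k < L, Λ (X ^ k) = s k) ∧
      ∀ Q, (∀ k < P.natDegree, Λ (X ^ k * Q) = 0) → ∀ R, Λ (R * Q) = 0 := by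
  set PQ := P.map (Int.castRingHom ℚ) with hPQ
  have hPQ0 : PQ ≠ 0 := by
    rw [hPQ, Ne, Polynomial.map_eq_zero_iff (Int.castRingHom ℚ).injective_int]; exact hP
  have hdeg : PQ.natDegree = P.natDegree := natDegree_map_eq_of_injective (Int.castRingHom ℚ).injective_int P
  set P' := PQ * C PQ.leadingCoeff⁻¹ with hP'
  have hmon : P'.Monic := monic_mul_leadingCoeff_inv hPQ0
  have hlc : PQ.leadingCoeff ≠ 0 := leadingCoeff_ne_zero.mpr hPQ0
  have hdeg' : P'.natDegree = P.natDegree := by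
    rw [hP', natDegree_mul_C (inv_ne_zero hlc), hdeg]
  have hPP' : PQ = P' * C PQ.leadingCoeff := by
    rw [hP', mul_assoc, ← C_mul, inv_mul_cancel₀ hlc]; simp
  let Λ : ℚ[X] →ₗ[ℚ] ℚ :=
    (∑ i ∈ Finset.range P.natDegree, (s i : ℚ) • lcoeff ℚ i) ∘ₗ modByMonicHom P'
  have hΛ : ∀ Q, Λ Q = ∑ i ∈ Finset.range P.natDegree, (s i : ℚ) * (Q %ₘ P').coeff i := by
    intro Q
    simp [Λ]
  have h1 : ∀ R, Λ (R * PQ) = 0 := by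
    intro R
    rw [hΛ]
    have : (R * PQ) %ₘ P' = 0 := by
      rw [modByMonic_eq_zero_iff_dvd hmon]
      exact Dvd.dvd.mul_left ⟨_, hPP'⟩ R
    simp [this]
  have hred : ∀ R Q, (∀ k < P.natDegree, Λ (X ^ k * Q) = 0) → Λ (R * Q) = 0 := by
    intro R Q hQ
    have e := modByMonic_add_div R P'
    have hd : P' * (R /ₘ P') * Q = (C PQ.leadingCoeff⁻¹ * (R /ₘ P') * Q) * PQ := by
      rw [hP']; ring
    rw [← e, add_mul, map_add, hd, h1, add_zero]
    by_cases hz : R %ₘ P' = 0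
    · simp [hz]
    have hlt : (R %ₘ P').natDegree < P.natDegree := by
      rw [← hdeg']
      exact natDegree_lt_natDegree hz (degree_modByMonic_lt _ hmon)
    rw [as_sum_range' (R %ₘ P') _ hlt, Finset.sum_mul, map_sum]
    apply Finset.sum_eq_zero
    intro i hi
    rw [← C_mul_X_pow_eq_monomial, mul_assoc, ← smul_eq_C_mul, map_smul, hQ i (by simpa using hi), smul_zero]
  refine ⟨Λ, h1, ?_, fun Q h R => hred R Q h⟩
  intro k
  induction k using Nat.strong_induction_on with
  | _ k ih =>
    intro hk
    by_cases hlt : k < P.natDegree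
    · rw [hΛ]
      have : (X ^ k : ℚ[X]) %ₘ P' = X ^ k := by
        rw [modByMonic_eq_self_iff hmon, degree_X_pow, degree_eq_natDegree hmon.ne_zero, hdeg']
        exact_mod_cast hlt
      rw [this]
      simp [coeff_X_pow, hlt]
    · obtain ⟨j, rfl⟩ := Nat.exists_eq_add_of_le' (not_lt.mp hlt)
      have e1 := h1 (X ^ j)
      have e2 := hs j hk
      have e3 : X ^ j * PQ = ∑ i ∈ Finset.range (P.natDegree + 1), (P.coeff i : ℚ) • X ^ (j + i) := by
        conv_lhs => rw [as_sum_range' PQ (P.natDegree + 1) (by omega), Finset.mul_sum]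
        apply Finset.sum_congr rfl
        intro i _
        rw [← C_mul_X_pow_eq_monomial, smul_eq_C_mul, hPQ, coeff_map, pow_add]
        simp; ring
      rw [e3, map_sum, Finset.sum_range_succ] at e1
      have e2' : ((∑ i ∈ Finset.range (P.natDegree + 1), P.coeff i * s (j + i) : ℤ) : ℚ) = 0 := by
        rw [e2]; simp
      push_cast at e2'
      rw [Finset.sum_range_succ] at e2'
      have e4 : ∑ i ∈ Finset.range P.natDegree, Λ ((P.coeff i : ℚ) • X ^ (j + i)) =
          ∑ i ∈ Finset.range P.natDegree, (P.coeff i : ℚ) * (s (j + i) : ℚ) := by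
        apply Finset.sum_congr rfl
        intro i hi
        have hi' : i < P.natDegree := by simpa using hi
        rw [map_smul, ih (j + i) (by omega) (by omega), smul_eq_mul]
      rw [e4, map_smul, smul_eq_mul] at e1
      have hne : (P.coeff P.natDegree : ℚ) ≠ 0 := by
        have : P.coeff P.natDegree ≠ 0 := by simpa using hP
        exact_mod_cast this
      apply mul_left_cancel₀ hne
      linarith

lemma exists_m1 (p : ℕ) [Fact p.Prime] (θ b : ZMod p) (hb : b ≠ 0)
    (s : ℕ → ℤ) (hsb : ∀ k, (s k : ZMod p) = b * θ ^ k) (P : ℤ[X]) (hP : P ≠ 0) (L : ℕ)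
    (hL : P.natDegree < L)
    (hs : ∀ k, k + P.natDegree < L →
      ∑ i ∈ Finset.range (P.natDegree + 1), P.coeff i * s (k + i) = 0) :
    ∃ m : ℤ[X], Irreducible m ∧ m.IsPrimitive ∧ m ∣ P ∧ aeval θ m = 0 ∧
      ∀ (j D : ℕ) (c : ℕ → ℤ), P.natDegree + j * D ≤ L →
        (∀ k < P.natDegree, ∑ i ∈ Finset.range D, c i * s (k + j * i) = 0) →
        m ∣ ∑ i ∈ Finset.range D, C (c i) * X ^ (j * i) := by
  classical
  obtain ⟨Λ, h1, h2, h3⟩ := exists_lam s P hP L hs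
  let I : Ideal ℚ[X] :=
    { carrier := {Q | ∀ R, Λ (R * Q) = 0}
      add_mem' := by
        intro a b ha hb R
        rw [mul_add, map_add, ha R, hb R, add_zero]
      zero_mem' := by intro R; simp
      smul_mem' := by
        intro c x hx R
        rw [smul_eq_mul, ← mul_assoc]; exact hx _ }
  have hI : ∀ Q, Q ∈ I ↔ ∀ R, Λ (R * Q) = 0 := fun Q => Iff.rfl
  obtain ⟨g, hg⟩ : ∃ g, I = Ideal.span {g} := (IsPrincipalIdealRing.principal I).principal
  have hgI : g ∈ I := by rw [hg]; exact Ideal.mem_span_singleton_self g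
  have hPI : P.map (Int.castRingHom ℚ) ∈ I := h1
  have hdiv : ∀ Q ∈ I, g ∣ Q := by
    intro Q hQ; rw [hg] at hQ; exact Ideal.mem_span_singleton.mp hQ
  have hPQ0 : P.map (Int.castRingHom ℚ) ≠ 0 := by
    rw [Ne, Polynomial.map_eq_zero_iff (Int.castRingHom ℚ).injective_int]; exact hP
  have hg0 : g ≠ 0 := by
    rintro rfl
    exact hPQ0 (zero_dvd_iff.mp (hdiv _ hPI))
  obtain ⟨n, hnm, hn⟩ := IsLocalization.integerNormalization_spec (nonZeroDivisors ℤ) g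
  set G := IsLocalization.integerNormalization (nonZeroDivisors ℤ) g with hG
  have hn0 : (n : ℤ) ≠ 0 := nonZeroDivisors.ne_zero hnm
  have hG0 : G ≠ 0 := by
    intro h
    rw [h] at hn
    simp at hn
    exact hn.elim hn0 hg0
  have hmapG : G.map (Int.castRingHom ℚ) = C ((n : ℤ) : ℚ) * g := by
    have : (algebraMap ℤ ℚ) = Int.castRingHom ℚ := rfl
    rw [← this, hn, ← smul_eq_C_mul]
    ext i
    simp
  set m0 := G.primPart with hm0
  have hcont : G.content ≠ 0 := by rwa [Ne, content_eq_zero_iff]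
  have hGm : G = C G.content * m0 := G.eq_C_content_mul_primPart
  have hassoc : Associated (m0.map (Int.castRingHom ℚ)) g := by
    have e : C (G.content : ℚ) * m0.map (Int.castRingHom ℚ) = C ((n : ℤ) : ℚ) * g := by
      rw [← hmapG]
      conv_rhs => rw [hGm]
      simp
    have u1 : IsUnit (C (G.content : ℚ)) := isUnit_C.mpr (by simpa using hcont)
    have u2 : IsUnit (C ((n : ℤ) : ℚ)) := isUnit_C.mpr (by simpa using hn0)
    have a1 : Associated (m0.map (Int.castRingHom ℚ)) (C (G.content : ℚ) * m0.map (Int.castRingHom ℚ)) :=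
      (associated_isUnit_mul_right_iff u1).mpr (Associated.refl _) 
    have a2 : Associated (C ((n : ℤ) : ℚ) * g) g := (associated_isUnit_mul_left_iff u2).mpr (Associated.refl _)
    rw [e] at a1
    exact a1.trans a2
  have hprim : m0.IsPrimitive := G.isPrimitive_primPart
  have hm0I : m0.map (Int.castRingHom ℚ) ∈ I := by
    rw [hg]; exact Ideal.mem_span_singleton.mpr hassoc.symm.dvd
  have hdvd : ∀ Q : ℤ[X], Q.map (Int.castRingHom ℚ) ∈ I → m0 ∣ Q := by
    intro Q hQ
    rw [IsPrimitive.Int.dvd_iff_map_cast_dvd_map_cast _ _ hprim]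
    exact hassoc.dvd.trans (hdiv _ hQ)
  have hm0P : m0 ∣ P := hdvd P hPI
  have hm0deg : m0.natDegree < L := lt_of_le_of_lt (natDegree_le_of_dvd hm0P hP) hL
  have hev : aeval θ m0 = 0 := by
    have e := hm0I 1
    rw [one_mul, as_sum_range_C_mul_X_pow (m0.map _), map_sum] at e
    have hd2 : (m0.map (Int.castRingHom ℚ)).natDegree = m0.natDegree :=
      natDegree_map_eq_of_injective (Int.castRingHom ℚ).injective_int m0
    rw [hd2] at e
    have e' : ∑ i ∈ Finset.range (m0.natDegree + 1), m0.coeff i * s i = 0 := by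
      have : ((∑ i ∈ Finset.range (m0.natDegree + 1), m0.coeff i * s i : ℤ) : ℚ) = 0 := by
        rw [← e]
        push_cast
        apply Finset.sum_congr rfl
        intro i hi
        have : i < L := by
          have : i < m0.natDegree + 1 := by simpa using hi
          omega
        rw [← smul_eq_C_mul, map_smul, h2 i this]
        simp
      exact_mod_cast this
    have e2 : ((∑ i ∈ Finset.range (m0.natDegree + 1), m0.coeff i * s i : ℤ) : ZMod p) = 0 := by
      rw [e']; simp
    push_cast at e2
    have e3 : b * aeval θ m0 = 0 := by
      rw [← e2, aeval_eq_sum_range, Finset.mul_sum]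
      apply Finset.sum_congr rfl
      intro i _
      rw [hsb]; simp; ring
    exact (mul_eq_zero.mp e3).resolve_left hb
  have hm00 : m0 ≠ 0 := hprim.ne_zero
  obtain ⟨m1, hm1, hm1ev⟩ : ∃ m1 ∈ UniqueFactorizationMonoid.factors m0, aeval θ m1 = 0 := by
    have hp := UniqueFactorizationMonoid.factors_prod hm00
    have : m0 ∣ (UniqueFactorizationMonoid.factors m0).prod := hp.symm.dvd
    have h0 : aeval θ (UniqueFactorizationMonoid.factors m0).prod = 0 := by
      obtain ⟨w, hw⟩ := this
      rw [hw, map_mul, hev, zero_mul]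
    rw [map_multiset_prod, Multiset.prod_eq_zero_iff, Multiset.mem_map] at h0
    exact h0
  have hm1d : m1 ∣ m0 := UniqueFactorizationMonoid.dvd_of_mem_factors hm1
  refine ⟨m1, UniqueFactorizationMonoid.irreducible_of_factor m1 hm1, 
    isPrimitive_of_dvd hprim hm1d, hm1d.trans hm0P, hm1ev, ?_⟩
  intro j D c hjD hc
  apply hm1d.trans
  apply hdvd
  rw [hI]
  apply h3
  intro k hk
  have : ((∑ i ∈ Finset.range D, c i * s (k + j * i) : ℤ) : ℚ) = 0 := by rw [hc k hk]; simp
  rw [← this]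
  rw [Polynomial.map_sum, Finset.mul_sum, map_sum]
  push_cast
  apply Finset.sum_congr rfl
  intro i hi
  have hi' : i < D := by simpa using hi
  have hlt : k + j * i < L := by
    have : j * i ≤ j * D := Nat.mul_le_mul_left _ hi'.le
    omega
  have e : (X : ℚ[X]) ^ k * (C (c i) * X ^ (j * i)).map (Int.castRingHom ℚ) = (c i : ℚ) • X ^ (k + j * i) := by
    rw [smul_eq_C_mul, pow_add]; simp; ring
  rw [e, map_smul, h2 _ hlt, smul_eq_mul]

lemma norm_root_le (Q : ℤ[X]) (hQ : Q ≠ 0) (hc : ∀ i, |Q.coeff i| < 2) (z : ℂ) (hz : aeval z Q = 0) :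
    ‖z‖ ≤ 2 := by
  set q := Q.map (Int.castRingHom ℂ) with hq
  have hinj : Function.Injective (Int.castRingHom ℂ) := (Int.castRingHom ℂ).injective_int
  have hq0 : q ≠ 0 := by rwa [hq, Ne, Polynomial.map_eq_zero_iff hinj]
  have hr : q.IsRoot z := by
    rw [IsRoot.def, hq, eval_map]
    rw [aeval_def] at hz
    exact hz
  have h := IsRoot.norm_lt_cauchyBound hq0 hr
  have hb : cauchyBound q ≤ 2 := by
    have hl : (1 : NNReal) ≤ ‖q.leadingCoeff‖₊ := by
      rw [hq, leadingCoeff_map_of_injective hinj]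
      have h1 : Q.leadingCoeff ≠ 0 := by simpa using hQ
      have h2 : (1 : ℤ) ≤ |Q.leadingCoeff| := Int.one_le_abs h1
      rw [← NNReal.coe_le_coe]
      simp only [NNReal.coe_one, coe_nnnorm, eq_intCast, Complex.norm_intCast]
      exact_mod_cast h2
    have hs : Finset.sup (Finset.range q.natDegree) (fun i => ‖q.coeff i‖₊) ≤ 1 := by
      apply Finset.sup_le
      intro i _
      have h2 : |Q.coeff i| ≤ 1 := by have := hc i; omega
      rw [← NNReal.coe_le_coe, hq, coeff_map]
      simp only [NNReal.coe_one, coe_nnnorm, eq_intCast, Complex.norm_intCast]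
      exact_mod_cast h2
    unfold cauchyBound
    calc _ ≤ (1 : NNReal) / 1 + 1 := by gcongr
      _ = 2 := by norm_num
  have := h.le.trans hb
  exact_mod_cast this

lemma root_unity (m : ℤ[X]) (hirr : Irreducible m) (hprim : m.IsPrimitive) (u N : ℕ)
    (hdeg : m.natDegree < u)
    (hQ : ∀ j, 1 ≤ j → j ≤ N → ∃ Q : ℤ[X], Q ≠ 0 ∧ (∀ i, |Q.coeff i| < 2) ∧ m ∣ expand ℤ j Q)
    (hX : ¬ m ∣ X) (hN : (2 * 4 ^ u + 1) ^ u * u ≤ N) :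
    ∃ t, 0 < t ∧ t ≤ N ∧ m ∣ X ^ t - 1 := by
  classical
  set mQ := m.map (Int.castRingHom ℚ) with hmQ
  have hirrQ : Irreducible mQ := (IsPrimitive.Int.irreducible_iff_irreducible_map_cast hprim).mp hirr
  have : Fact (Irreducible mQ) := ⟨hirrQ⟩
  let K := AdjoinRoot mQ
  let x : K := AdjoinRoot.root mQ
  have : CharZero K := charZero_of_injective_algebraMap (algebraMap ℚ K).injective
  have : FiniteDimensional ℚ K := (AdjoinRoot.powerBasis hirrQ.ne_zero).finite
  have : NumberField K := { }
  have hfin : Module.finrank ℚ K = m.natDegree := by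
    rw [(AdjoinRoot.powerBasis hirrQ.ne_zero).finrank, AdjoinRoot.powerBasis_dim, hmQ,
      natDegree_map_eq_of_injective (Int.castRingHom ℚ).injective_int]
  have hdvd : ∀ F : ℤ[X], aeval x F = 0 ↔ m ∣ F := by
    intro F
    rw [IsPrimitive.Int.dvd_iff_map_cast_dvd_map_cast _ _ hprim, ← hmQ, ← AdjoinRoot.mk_eq_zero,
      ← AdjoinRoot.aeval_eq]
    have : aeval x F = aeval x (F.map (Int.castRingHom ℚ)) := by
      have := aeval_map_algebraMap ℚ x F
      rw [← this]; rfl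
    rw [this]
    exact Iff.rfl
  have hN1 : 1 ≤ N := by
    refine le_trans ?_ hN
    have hu : 0 < u := by omega
    exact Nat.succ_le_of_lt (by positivity)
  have hxint : IsIntegral ℤ x := by
    obtain ⟨Q, hQ0, hQc, hQd⟩ := hQ 1 le_rfl hN1
    rw [expand_one, ← hdvd] at hQd
    have h1 : Q.leadingCoeff ≠ 0 := by simpa using hQ0
    have h2 := abs_lt.mp (hQc Q.natDegree)
    rw [coeff_natDegree] at h2
    have h3 : Q.leadingCoeff = 1 ∨ Q.leadingCoeff = -1 := by omega
    rcases h3 with h3 | h3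
    · exact ⟨Q, h3, by rw [← aeval_def]; exact hQd⟩
    · refine ⟨-Q, ?_, ?_⟩
      · rw [Monic, leadingCoeff_neg, h3]; norm_num
      · rw [← aeval_def, map_neg, hQd, neg_zero]
  have hx0 : x ≠ 0 := by
    intro h
    apply hX
    rw [← hdvd, aeval_X, h]
  have hbd : ∀ j ∈ Finset.range (N + 1), ∀ φ : K →+* ℂ, ‖φ (x ^ j)‖ ≤ 2 := by
    intro j hj φ
    rcases Nat.eq_zero_or_pos j with h0 | h0
    · subst h0; simp
    obtain ⟨Q, hQ0, hQc, hQd⟩ := hQ j h0 (by simpa [Nat.lt_succ_iff] using hj)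
    apply norm_root_le Q hQ0 hQc
    rw [← hdvd, expand_aeval] at hQd
    have : aeval (φ (x ^ j)) Q = φ (aeval (x ^ j) Q) := by
      rw [aeval_def, aeval_def, hom_eval₂]
      congr 1
      exact RingHom.ext_int _ _
    rw [this, hQd, map_zero]
  have hcoef : ∀ j ∈ Finset.range (N + 1), ∀ i, |(minpoly ℤ (x ^ j)).coeff i| ≤ 4 ^ u := by
    intro j hj i
    have hintx : IsIntegral ℤ (x ^ j) := hxint.pow j
    have h := NumberField.Embeddings.coeff_bdd_of_norm_le (hbd j hj) i
    rw [minpoly.isIntegrallyClosed_eq_field_fractions' ℚ hintx, coeff_map, eq_intCast,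
      Int.norm_cast_rat, Int.norm_eq_abs, hfin] at h
    have h2 : (max 2 1 : ℝ) ^ m.natDegree * (m.natDegree.choose (m.natDegree / 2) : ℝ) ≤ 4 ^ u := by
      have e1 : (m.natDegree.choose (m.natDegree / 2) : ℝ) ≤ 2 ^ m.natDegree := by
        exact_mod_cast Nat.choose_le_two_pow _ _
      have e2 : (max 2 1 : ℝ) = 2 := by norm_num
      rw [e2]
      calc (2 : ℝ) ^ m.natDegree * _ ≤ 2 ^ m.natDegree * 2 ^ m.natDegree := by gcongr
        _ = 4 ^ m.natDegree := by rw [← mul_pow]; norm_num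
        _ ≤ 4 ^ u := pow_le_pow_right₀ (by norm_num) hdeg.le
    have h3 := h.trans h2
    exact_mod_cast h3
  have hmdeg : ∀ j, (minpoly ℤ (x ^ j)).natDegree < u := by
    intro j
    have hintx : IsIntegral ℤ (x ^ j) := hxint.pow j
    rw [← (minpoly.monic hintx).natDegree_map (algebraMap ℤ ℚ),
      ← minpoly.isIntegrallyClosed_eq_field_fractions' ℚ hintx]
    refine lt_of_le_of_lt (minpoly.natDegree_le _) ?_
    rw [hfin]; exact hdeg
  let f : ℕ → (Fin u → ℤ) := fun j i => (minpoly ℤ (x ^ j)).coeff i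
  let T : Finset (Fin u → ℤ) := Fintype.piFinset fun _ => Finset.Icc (-(4 ^ u)) (4 ^ u)
  have hT : T.card = (2 * 4 ^ u + 1) ^ u := by
    simp only [T, Fintype.card_piFinset, Int.card_Icc, Finset.prod_const, Finset.card_univ,
      Fintype.card_fin]
    congr 1
    have : ((4 : ℤ) ^ u + 1 - -4 ^ u) = ((2 * 4 ^ u + 1 : ℕ) : ℤ) := by push_cast; ring
    rw [this, Int.toNat_natCast]
  have hmaps : ∀ j ∈ Finset.range (N + 1), f j ∈ T := by
    intro j hj
    simp only [T, Fintype.mem_piFinset, Finset.mem_Icc]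
    intro i
    exact abs_le.mp (hcoef j hj i)
  have hcard : T.card * u < (Finset.range (N + 1)).card := by
    rw [hT, Finset.card_range]; omega
  obtain ⟨y, -, hy⟩ := Finset.exists_lt_card_fiber_of_mul_lt_card_of_maps_to hmaps hcard
  set S := (Finset.range (N + 1)).filter (fun j => f j = y) with hS
  obtain ⟨j0, hj0⟩ : S.Nonempty := Finset.card_pos.mp (by omega)
  have hpoly : ∀ j ∈ S, minpoly ℤ (x ^ j) = minpoly ℤ (x ^ j0) := by
    intro j hj
    have e1 := (Finset.mem_filter.mp hj).2
    have e2 := (Finset.mem_filter.mp hj0).2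
    ext i
    by_cases hi : i < u
    · have := congrFun (e1.trans e2.symm) ⟨i, hi⟩
      exact this
    · rw [coeff_eq_zero_of_natDegree_lt (by have := hmdeg j; omega),
        coeff_eq_zero_of_natDegree_lt (by have := hmdeg j0; omega)]
  set q := (minpoly ℤ (x ^ j0)).map (algebraMap ℤ K) with hq
  have hqm : q.Monic := (minpoly.monic (hxint.pow j0)).map _
  have hroots : ∀ j ∈ S, x ^ j ∈ q.roots.toFinset := by
    intro j hj
    rw [Multiset.mem_toFinset, mem_roots hqm.ne_zero, IsRoot.def, hq, eval_map, ← aeval_def, ← hpoly j hj]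
    exact minpoly.aeval _ _
  have hcr : q.roots.toFinset.card < S.card := by
    calc _ ≤ Multiset.card q.roots := Multiset.toFinset_card_le _
      _ ≤ q.natDegree := card_roots' q
      _ = (minpoly ℤ (x ^ j0)).natDegree := (minpoly.monic (hxint.pow j0)).natDegree_map _
      _ < u := hmdeg j0
      _ < S.card := hy
  obtain ⟨i, hi, j, hj, hij, heq⟩ := Finset.exists_ne_map_eq_of_card_lt_of_maps_to hcr hroots
  have key : ∀ i ∈ S, ∀ j ∈ S, i < j → x ^ i = x ^ j → ∃ t, 0 < t ∧ t ≤ N ∧ m ∣ X ^ t - 1 := by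
    intro i hi j hj hij heq
    have hjN : j < N + 1 := by simpa using (Finset.mem_filter.mp hj).1
    refine ⟨j - i, by omega, by omega, ?_⟩
    rw [← hdvd]
    simp only [map_sub, map_pow, aeval_X, map_one]
    apply mul_left_cancel₀ (pow_ne_zero i hx0)
    rw [mul_sub, ← pow_add, mul_one, mul_zero, show i + (j - i) = j by omega, heq, sub_self]
  rcases lt_or_gt_of_ne hij with h | h
  · exact key i hi j hj h heq
  · exact key j hj i hi h heq.symm

lemma nt_main (p : ℕ) [Fact p.Prime] (u : ℕ) (hu : 1 ≤ u) (hp : p < 2 ^ (u ^ 3)) (b θ : ZMod p)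
    (hb : b ≠ 0) (hθ : θ ≠ 0) (L M N : ℕ) (hs : ∀ k < L, |(b * θ ^ k).valMinAbs| * M < p)
    (hM1 : u * 2 ^ (u ^ 2) ≤ M) (hM2 : u ^ 3 * 2 ≤ M) (hN : (2 * 4 ^ u + 1) ^ u * u ≤ N)
    (hL : u + N * u ^ 3 ≤ L) : ∃ t, 0 < t ∧ t ≤ N ∧ θ ^ t = 1 := by
  have hp0 : 0 < p := (Fact.out : p.Prime).pos
  set s : ℕ → ℤ := fun k => (b * θ ^ k).valMinAbs with hsdef
  have hsb : ∀ k, (s k : ZMod p) = b * θ ^ k := fun k => ZMod.coe_valMinAbs _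
  have hM : ∀ k < L, ∀ M' : ℕ, M' ≤ M → |s k| * (M' : ℕ) < p := by
    intro k hk M' hM'
    refine lt_of_le_of_lt ?_ (hs k hk)
    gcongr
  have hN1 : 1 ≤ N := le_trans (Nat.succ_le_of_lt (by positivity)) hN
  have huL : u < L := by
    have : 1 ≤ u ^ 3 := Nat.one_le_pow _ _ hu
    have : 1 * 1 ≤ N * u ^ 3 := Nat.mul_le_mul hN1 this
    omega
  obtain ⟨P, hP0, hPd, hPc, hPe⟩ := pig p θ u (2 ^ (u ^ 2)) (by
    rw [← pow_mul, show u ^ 2 * u = u ^ 3 by ring]; exact hp)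
  have hPd' : P.natDegree < u := by rwa [natDegree_lt_iff_degree_lt hP0]
  obtain ⟨m, hirr, hprim, hmP, hmθ, hmQ⟩ := exists_m1 p θ b hb s hsb P hP0 L (by omega) (by
    intro k hk
    apply exact_rel p s (P.natDegree + 1) (2 ^ (u ^ 2)) P.coeff (fun i => (hPc i).le) (fun i => k + i)
    · intro i hi
      apply hM (k + i) (by omega)
      exact le_trans (Nat.mul_le_mul_right _ hPd') hM1
    · exact hp0
    · push_cast
      have : ∑ i ∈ Finset.range (P.natDegree + 1), (P.coeff i : ZMod p) * (s (k + i) : ZMod p)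
          = b * θ ^ k * aeval θ P := by
        rw [aeval_eq_sum_range, Finset.mul_sum]
        apply Finset.sum_congr rfl
        intro i _
        rw [hsb, pow_add]; simp; ring
      rw [this, hPe, mul_zero])
  have hQ : ∀ j, 1 ≤ j → j ≤ N → ∃ Q : ℤ[X], Q ≠ 0 ∧ (∀ i, |Q.coeff i| < 2) ∧ m ∣ expand ℤ j Q := by
    intro j hj1 hjN
    obtain ⟨Q, hQ0, hQd, hQc, hQe⟩ := pig p (θ ^ j) (u ^ 3) 2 hp
    refine ⟨Q, hQ0, fun i => by exact_mod_cast hQc i, ?_⟩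
    have hQd' : Q.natDegree < u ^ 3 := by rwa [natDegree_lt_iff_degree_lt hQ0]
    have hjL : j * u ^ 3 ≤ N * u ^ 3 := Nat.mul_le_mul_right _ hjN
    have h := hmQ j (u ^ 3) Q.coeff (by omega) (by
      intro k hk
      apply exact_rel p s (u ^ 3) 2 Q.coeff (fun i => (hQc i).le) (fun i => k + j * i)
      · intro i hi
        refine hM (k + j * i) ?_ _ hM2
        have : j * i ≤ j * u ^ 3 := Nat.mul_le_mul_left _ hi.le
        omega
      · exact hp0
      · push_cast
        have : ∑ i ∈ Finset.range (u ^ 3), (Q.coeff i : ZMod p) * (s (k + j * i) : ZMod p)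
            = b * θ ^ k * aeval (θ ^ j) Q := by
          rw [aeval_eq_sum_range' hQd', Finset.mul_sum]
          apply Finset.sum_congr rfl
          intro i _
          rw [hsb, pow_add, pow_mul]; simp; ring
        rw [this, hQe, mul_zero])
    convert h using 1
    conv_lhs => rw [as_sum_range_C_mul_X_pow' _ hQd']
    simp [map_sum, pow_mul]
  obtain ⟨t, ht0, htN, htd⟩ := root_unity m hirr hprim u N
    (lt_of_le_of_lt (natDegree_le_of_dvd hmP hP0) hPd') hQ (by
      rintro ⟨w, hw⟩
      apply hθ
      have : aeval θ (X : ℤ[X]) = θ := aeval_X θ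
      rw [← this, hw, map_mul, hmθ, zero_mul]) hN
  refine ⟨t, ht0, htN, ?_⟩
  obtain ⟨w, hw⟩ := htd
  have : aeval θ (X ^ t - 1 : ℤ[X]) = 0 := by rw [hw, map_mul, hmθ, zero_mul]
  simpa [sub_eq_zero] using this

def affPerm {F : Type*} [Field F] (c : F) (hc : c ≠ 0) (d : F) : Equiv.Perm F where
  toFun y := c * y + d
  invFun y := c⁻¹ * (y - d)
  left_inv y := by field_simp; ring
  right_inv y := by field_simp; ring

lemma len_bound {F : Type*} [Field F] (γ : F) (hγ : γ ≠ 0) (δ : Equiv.Perm F → ℝ) (D : ℝ)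
    (hone : δ 1 = 0) (hmul : ∀ a b, δ (a * b) ≤ δ a + δ b) (hinv : ∀ a, δ a⁻¹ = δ a)
    (h1 : δ (affPerm (-γ) (neg_ne_zero.mpr hγ) γ) ≤ D)
    (h2 : δ (affPerm (-γ⁻¹) (neg_ne_zero.mpr (inv_ne_zero hγ)) γ⁻¹) ≤ D) (k : ℕ) :
    δ (affPerm 1 one_ne_zero ((γ⁻¹ - γ) * (γ⁻¹ ^ 2) ^ k)) ≤ (4 * k + 6) * D := by
  set G := affPerm (-γ) (neg_ne_zero.mpr hγ) γ with hG
  set G' := affPerm (-γ⁻¹) (neg_ne_zero.mpr (inv_ne_zero hγ)) γ⁻¹ with hG'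
  set Mu := G * G'⁻¹ with hMu
  have hMu' : Mu = affPerm (γ ^ 2) (pow_ne_zero _ hγ) 0 := by
    rw [hMu, mul_inv_eq_iff_eq_mul]
    ext y
    simp only [hG, hG', affPerm, Equiv.Perm.mul_apply, Equiv.coe_fn_mk]
    field_simp
    ring
  have hMuD : δ Mu ≤ 2 * D := by
    have := hmul G G'⁻¹
    rw [hinv] at this
    linarith
  have hMuk : ∀ k : ℕ, δ (Mu ^ k) ≤ 2 * k * D := by
    intro k
    induction k with
    | zero => simp [hone]
    | succ k ih =>
      rw [pow_succ]
      have := hmul (Mu ^ k) Mu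
      push_cast
      linarith
  set T := Mu⁻¹ * (G * Mu * G⁻¹) with hT
  have hTD : δ T ≤ 6 * D := by
    have a1 := hmul Mu⁻¹ (G * Mu * G⁻¹)
    have a2 := hmul (G * Mu) G⁻¹
    have a3 := hmul G Mu
    rw [hinv] at a1 a2
    linarith
  have hMukv : ∀ k : ℕ, Mu ^ k = affPerm (γ ^ (2 * k)) (pow_ne_zero _ hγ) 0 := by
    intro k
    induction k with
    | zero => ext y; simp [affPerm]
    | succ k ih =>
      rw [pow_succ, ih, hMu']
      ext y
      simp only [affPerm, Equiv.Perm.mul_apply, Equiv.coe_fn_mk]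
      ring
  have hTv : T = affPerm 1 one_ne_zero (γ⁻¹ - γ) := by
    rw [hT, inv_mul_eq_iff_eq_mul, mul_inv_eq_iff_eq_mul, hMu']
    ext y
    simp only [hG, affPerm, Equiv.Perm.mul_apply, Equiv.coe_fn_mk]
    field_simp
    ring
  have hfin : affPerm 1 one_ne_zero ((γ⁻¹ - γ) * (γ⁻¹ ^ 2) ^ k)
      = (Mu ^ k)⁻¹ * (T * Mu ^ k) := by
    rw [eq_inv_mul_iff_mul_eq, hTv, hMukv]
    ext y
    simp only [affPerm, Equiv.Perm.mul_apply, Equiv.coe_fn_mk]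
    rw [← pow_mul, inv_pow]
    field_simp
    ring
  rw [hfin]
  have a1 := hmul (Mu ^ k)⁻¹ (T * Mu ^ k)
  have a2 := hmul T (Mu ^ k)
  have a3 := hMuk k
  rw [hinv] at a1
  linarith

lemma parseval (p : ℕ) [Fact p.Prime] (f : ZMod p → ℂ) :
    ∑ ξ, ‖∑ y, ZMod.stdAddChar (ξ * y) * f y‖ ^ 2 = p * ∑ y, ‖f y‖ ^ 2 := by
  have hps := ZMod.isPrimitive_stdAddChar p
  have : (∑ ξ, ((‖∑ y, ZMod.stdAddChar (ξ * y) * f y‖ ^ 2 : ℝ) : ℂ)) = ((p * ∑ y, ‖f y‖ ^ 2 : ℝ) : ℂ) := by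
    have e1 : ∀ ξ : ZMod p, ((‖∑ y, ZMod.stdAddChar (ξ * y) * f y‖ ^ 2 : ℝ) : ℂ)
        = ∑ y, ∑ z, ZMod.stdAddChar (ξ * (y - z)) * (f y * (starRingEnd ℂ) (f z)) := by
      intro ξ
      push_cast
      rw [← Complex.mul_conj', map_sum, Finset.sum_mul_sum]
      apply Finset.sum_congr rfl; intro y _
      apply Finset.sum_congr rfl; intro z _
      rw [RingHom.map_mul, mul_sub, sub_eq_add_neg, AddChar.map_add_eq_mul, AddChar.map_neg_eq_conj]
      ring
    simp_rw [e1]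
    rw [Finset.sum_comm]
    push_cast
    rw [Finset.mul_sum]
    apply Finset.sum_congr rfl; intro y _
    rw [Finset.sum_comm]
    simp_rw [← Finset.sum_mul, AddChar.sum_mulShift _ hps]
    rw [Finset.sum_eq_single y]
    · simp [Complex.mul_conj', ZMod.card]
    · intro z _ hz
      rw [if_neg (sub_ne_zero.mpr hz.symm)]; simp
    · simp
  exact_mod_cast this

lemma char_lower (p : ℕ) [Fact p.Prime] (a : ZMod p) :
    4 * |(a.valMinAbs : ℝ)| / p ≤ ‖ZMod.stdAddChar a - 1‖ := by
  have hp : (0 : ℝ) < p := by exact_mod_cast (Fact.out : p.Prime).pos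
  set v := a.valMinAbs with hv
  have e : ZMod.stdAddChar a = Complex.exp (Complex.I * ((2 * Real.pi * v / p : ℝ) : ℂ)) := by
    conv_lhs => rw [← ZMod.coe_valMinAbs a, ← hv, ZMod.stdAddChar_coe]
    congr 1
    push_cast
    ring
  rw [e, Complex.norm_exp_I_mul_ofReal_sub_one]
  have hmem := ZMod.valMinAbs_mem_Ioc a
  rw [← hv] at hmem
  have habs : |(v : ℝ)| * 2 ≤ p := by
    have h1 : -(p : ℤ) ≤ v * 2 := hmem.1.le
    have h2 : v * 2 ≤ (p : ℤ) := hmem.2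
    have h3 : |v| * 2 ≤ (p : ℤ) := by
      rcases abs_cases v with h | h <;> omega
    exact_mod_cast h3
  have hpi := Real.pi_pos
  have hx : |2 * Real.pi * v / p / 2| = Real.pi * |(v : ℝ)| / p := by
    rw [show 2 * Real.pi * v / p / 2 = Real.pi * v / p by ring, abs_div, abs_mul, abs_of_pos hpi,
      abs_of_pos hp]
  have h := Real.mul_abs_le_abs_sin (x := 2 * Real.pi * v / p / 2) (by
    rw [hx, div_le_iff₀ hp]
    nlinarith)
  rw [hx] at h
  rw [norm_mul, Real.norm_eq_abs, Real.norm_eq_abs, abs_two]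
  calc 4 * |(v : ℝ)| / p = 2 * (2 / Real.pi * (Real.pi * |(v : ℝ)| / p)) := by
        field_simp; ring
    _ ≤ _ := by linarith

lemma poincare (p : ℕ) [Fact p.Prime] (u : ℕ) (hu : 1 ≤ u) (hp : p < 2 ^ (u ^ 3)) (L M N : ℕ)
    (hM1 : u * 2 ^ (u ^ 2) ≤ M) (hM2 : u ^ 3 * 2 ≤ M) (hN : (2 * 4 ^ u + 1) ^ u * u ≤ N)
    (hL : u + N * u ^ 3 ≤ L) (γ : ZMod p) (hγ : γ ≠ 0) (hord : 2 * N < orderOf γ)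
    (f : ZMod p → ℝ) (S : ℝ)
    (hS1 : ∑ y, (f y - f ((1 - y) * γ)) ^ 2 ≤ S)
    (hS2 : ∑ y, (f y - f ((1 - y) * γ⁻¹)) ^ 2 ≤ S) :
    ∑ y, (f y - (∑ z, f z) / p) ^ 2 ≤ (M : ℝ) ^ 2 * (L * (4 * L + 6) ^ 2) * S := by
  classical
  have hp0 : (0 : ℝ) < p := by exact_mod_cast (Fact.out : p.Prime).pos
  have hN1 : 1 ≤ N := le_trans (Nat.succ_le_of_lt (by positivity)) hN
  have hM0 : 1 ≤ M := le_trans (Nat.succ_le_of_lt (by positivity)) hM1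
  have hS0 : 0 ≤ S := le_trans (Finset.sum_nonneg fun _ _ => sq_nonneg _) hS1
  let nn : (ZMod p → ℝ) → ℝ := fun h => ‖(WithLp.toLp 2 h : EuclideanSpace ℝ (ZMod p))‖
  have hnn : ∀ h, nn h = Real.sqrt (∑ y, h y ^ 2) := by
    intro h
    simp [nn, EuclideanSpace.norm_eq]
  have hadd : ∀ h h', nn (fun y => h y + h' y) ≤ nn h + nn h' := by
    intro h h'
    exact norm_add_le (WithLp.toLp 2 h : EuclideanSpace ℝ (ZMod p)) (WithLp.toLp 2 h')
  have hcomp : ∀ (h : ZMod p → ℝ) (σ : Equiv.Perm (ZMod p)), nn (fun y => h (σ y)) = nn h := by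
    intro h σ
    rw [hnn, hnn]
    congr 1
    exact Equiv.sum_comp σ (fun y => h y ^ 2)
  let δ : Equiv.Perm (ZMod p) → ℝ := fun σ => nn (fun y => f y - f (σ y))
  have hδ : ∀ σ, δ σ = Real.sqrt (∑ y, (f y - f (σ y)) ^ 2) := fun σ => hnn _
  have hlen := len_bound γ hγ δ (Real.sqrt S) (by rw [hδ]; simp) (by
      intro a b
      have h1 := hadd (fun y => f y - f (b y)) (fun y => f (b y) - f (a (b y)))
      have h2 := hcomp (fun y => f y - f (a y)) b
      have h3 : (fun y => f y - f (b y) + (f (b y) - f (a (b y)))) = fun y => f y - f ((a * b) y) := by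
        funext y; simp
      rw [h3] at h1
      simp only [δ]
      linarith) (by
      intro a
      have h1 := hcomp (fun y => f y - f (a⁻¹ y)) a
      rw [hδ, hδ]
      rw [hnn, hnn] at h1
      rw [← h1]
      congr 1
      apply Finset.sum_congr rfl
      intro y _
      rw [show a⁻¹ (a y) = y from Equiv.symm_apply_apply a y]
      ring) (by
      rw [hδ]
      apply Real.sqrt_le_sqrt
      refine le_trans (le_of_eq ?_) hS1
      apply Finset.sum_congr rfl
      intro y _
      simp only [affPerm, Equiv.coe_fn_mk]
      rw [show -γ * y + γ = (1 - y) * γ by ring]) (by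
      rw [hδ]
      apply Real.sqrt_le_sqrt
      refine le_trans (le_of_eq ?_) hS2
      apply Finset.sum_congr rfl
      intro y _
      simp only [affPerm, Equiv.coe_fn_mk]
      rw [show -γ⁻¹ * y + γ⁻¹ = (1 - y) * γ⁻¹ by ring])
  set τ := γ⁻¹ - γ with hτ
  set θ := γ⁻¹ ^ 2 with hθ
  have hθ0 : θ ≠ 0 := pow_ne_zero _ (inv_ne_zero hγ)
  have hτ0 : τ ≠ 0 := by
    intro h
    have h1 : γ ^ 2 = 1 := by
      have : γ⁻¹ = γ := sub_eq_zero.mp h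
      rw [sq]; nth_rewrite 1 [← this]; exact inv_mul_cancel₀ hγ
    have := orderOf_le_of_pow_eq_one (by norm_num) h1
    omega
  have hdisp : ∀ k : ℕ, k < L → ∑ y, (f y - f (y + τ * θ ^ k)) ^ 2 ≤ (4 * L + 6) ^ 2 * S := by
    intro k hk
    have h := hlen k
    rw [hδ, Real.sqrt_le_left (by positivity), mul_pow, Real.sq_sqrt hS0] at h
    simp only [affPerm, Equiv.coe_fn_mk, one_mul] at h
    refine h.trans ?_
    have : (k : ℝ) ≤ L := by exact_mod_cast hk.le
    gcongr
  set μ := (∑ z, f z) / p with hμ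
  let h : ZMod p → ℂ := fun y => ((f y - μ : ℝ) : ℂ)
  let F : ZMod p → ℂ := fun ξ => ∑ y, ZMod.stdAddChar (ξ * y) * h y
  have hF0 : F 0 = 0 := by
    simp only [F, h, zero_mul, AddChar.map_zero_eq_one, one_mul]
    rw [← Complex.ofReal_sum, Finset.sum_sub_distrib]
    have : (∑ z, f z) - ∑ _z : ZMod p, μ = 0 := by
      rw [Finset.sum_const, Finset.card_univ, ZMod.card, hμ, nsmul_eq_mul]
      field_simp
      ring
    rw [this]; simp
  have hPars : ∑ ξ, ‖F ξ‖ ^ 2 = p * ∑ y, (f y - μ) ^ 2 := by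
    have := parseval p h
    simp only [h, Complex.norm_real, Real.norm_eq_abs, sq_abs] at this
    exact this
  have hTr : ∀ a : ZMod p, ∑ ξ, ‖ZMod.stdAddChar (-ξ * a) - 1‖ ^ 2 * ‖F ξ‖ ^ 2
      = p * ∑ y, (f y - f (y + a)) ^ 2 := by
    intro a
    have e := parseval p (fun y => h (y + a) - h y)
    have e1 : ∀ ξ, ∑ y, ZMod.stdAddChar (ξ * y) * (h (y + a) - h y)
        = (ZMod.stdAddChar (-ξ * a) - 1) * F ξ := by
      intro ξ
      simp only [F]
      rw [sub_mul, one_mul]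
      simp_rw [mul_sub]
      rw [Finset.sum_sub_distrib]
      congr 1
      rw [Finset.mul_sum, ← Equiv.sum_comp (Equiv.addRight a)
        (fun y => ZMod.stdAddChar (-ξ * a) * (ZMod.stdAddChar (ξ * y) * h y))]
      apply Finset.sum_congr rfl
      intro y _
      rw [← mul_assoc, ← AddChar.map_add_eq_mul]
      simp only [Equiv.coe_addRight]
      congr 2
      ring
    simp_rw [e1, norm_mul, mul_pow] at e
    rw [e]
    congr 1
    apply Finset.sum_congr rfl
    intro y _
    have : h (y + a) - h y = ((f (y + a) - f y : ℝ) : ℂ) := by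
      simp only [h]; push_cast; ring
    rw [this, Complex.norm_real, Real.norm_eq_abs, sq_abs]
    ring
  have hlow : ∀ ξ : ZMod p, ‖F ξ‖ ^ 2 ≤ ∑ k ∈ Finset.range L,
      (M : ℝ) ^ 2 * (‖ZMod.stdAddChar (-ξ * (τ * θ ^ k)) - 1‖ ^ 2 * ‖F ξ‖ ^ 2) := by
    intro ξ
    by_cases hξ : ξ = 0
    · subst hξ; rw [hF0]; simp
    have hb : -ξ * τ ≠ 0 := mul_ne_zero (neg_ne_zero.mpr hξ) hτ0
    obtain ⟨k, hk, hk2⟩ : ∃ k < L, (p : ℤ) ≤ |(-ξ * τ * θ ^ k).valMinAbs| * M := by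
      by_contra! hcon
      obtain ⟨t, ht0, htN, ht⟩ := nt_main p u hu hp (-ξ * τ) θ hb hθ0 L M N hcon hM1 hM2 hN hL
      have h1 : γ ^ (2 * t) = 1 := by
        rw [hθ, ← pow_mul, inv_pow, inv_eq_one] at ht
        exact ht
      have := orderOf_le_of_pow_eq_one (by omega) h1
      omega
    have hcl := char_lower p (-ξ * τ * θ ^ k)
    have h1 : (1 : ℝ) ≤ M * ‖ZMod.stdAddChar (-ξ * (τ * θ ^ k)) - 1‖ := by
      rw [← mul_assoc]
      have hk3 : (p : ℝ) ≤ |((-ξ * τ * θ ^ k).valMinAbs : ℝ)| * M := by exact_mod_cast hk2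
      have : (1 : ℝ) ≤ M * (4 * |((-ξ * τ * θ ^ k).valMinAbs : ℝ)| / p) := by
        rw [← mul_div_assoc, le_div_iff₀ hp0]
        nlinarith
      exact this.trans (by gcongr)
    have h2 : (1 : ℝ) ≤ (M : ℝ) ^ 2 * ‖ZMod.stdAddChar (-ξ * (τ * θ ^ k)) - 1‖ ^ 2 := by
      rw [← mul_pow]; exact one_le_pow₀ h1
    calc ‖F ξ‖ ^ 2 = 1 * ‖F ξ‖ ^ 2 := by ring
      _ ≤ (M : ℝ) ^ 2 * ‖ZMod.stdAddChar (-ξ * (τ * θ ^ k)) - 1‖ ^ 2 * ‖F ξ‖ ^ 2 := by gcongr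
      _ = (M : ℝ) ^ 2 * (‖ZMod.stdAddChar (-ξ * (τ * θ ^ k)) - 1‖ ^ 2 * ‖F ξ‖ ^ 2) := by ring
      _ ≤ _ := Finset.single_le_sum (f := fun k => (M : ℝ) ^ 2 *
          (‖ZMod.stdAddChar (-ξ * (τ * θ ^ k)) - 1‖ ^ 2 * ‖F ξ‖ ^ 2))
          (fun _ _ => by positivity) (Finset.mem_range.mpr hk)
  have hfinal : p * ∑ y, (f y - μ) ^ 2 ≤ p * ((M : ℝ) ^ 2 * (L * (4 * L + 6) ^ 2) * S) := by
    rw [← hPars]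
    calc ∑ ξ, ‖F ξ‖ ^ 2 ≤ ∑ ξ, ∑ k ∈ Finset.range L,
          (M : ℝ) ^ 2 * (‖ZMod.stdAddChar (-ξ * (τ * θ ^ k)) - 1‖ ^ 2 * ‖F ξ‖ ^ 2) :=
          Finset.sum_le_sum fun ξ _ => hlow ξ
      _ = ∑ k ∈ Finset.range L, (M : ℝ) ^ 2 * (p * ∑ y, (f y - f (y + τ * θ ^ k)) ^ 2) := by
          rw [Finset.sum_comm]
          apply Finset.sum_congr rfl
          intro k _
          rw [← Finset.mul_sum, hTr]
      _ ≤ ∑ k ∈ Finset.range L, (M : ℝ) ^ 2 * (p * ((4 * L + 6) ^ 2 * S)) := by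
          apply Finset.sum_le_sum
          intro k hk
          have := hdisp k (Finset.mem_range.mp hk)
          gcongr
      _ = _ := by
          rw [Finset.sum_const, Finset.card_range, nsmul_eq_mul]; ring
  exact le_of_mul_le_mul_left hfinal hp0

end

/-- the involution `x ↦ x / (x - 1)` -/
def fstar {F : Type*} [Field F] [DecidableEq F] : Equiv.Perm F :=
  Function.Involutive.toPerm (fun x => if x = 1 then 1 else x / (x - 1)) (by
    intro x
    by_cases hx : x = 1
    · simp [hx]
    · have h1 : x - 1 ≠ 0 := sub_ne_zero.mpr hx
      have h2 : x / (x - 1) ≠ 1 := by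
        intro h
        rw [div_eq_one_iff_eq h1] at h
        have : (1 : F) = 0 := by linear_combination h
        exact one_ne_zero this
      simp only [hx, if_false, h2]
      have h3 : x / (x - 1) - 1 = 1 / (x - 1) := by field_simp; ring
      rw [h3]
      field_simp)

def chainPerm {F : Type*} [Field F] [DecidableEq F] (γ : F) (hγ : γ ≠ 0) : Equiv.Perm F :=
  fstar.trans (Equiv.mulRight₀ γ hγ)

lemma chainPerm_apply {F : Type*} [Field F] [DecidableEq F] (γ : F) (hγ : γ ≠ 0) (x : F) :
    chainPerm γ hγ x = (if x = 1 then 1 else x / (x - 1)) * γ := rfl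

lemma transfer_sum {F : Type*} [Field F] [DecidableEq F] [Fintype F] (γ : F) (hγ : γ ≠ 0)
    (φ : F → ℝ) :
    ∑ y : F, ((if y = 0 then φ 1 else φ y⁻¹) -
      (if (1 - y) * γ = 0 then φ 1 else φ ((1 - y) * γ)⁻¹)) ^ 2 =
    ∑ x, (φ x - φ (chainPerm γ⁻¹ (inv_ne_zero hγ) x)) ^ 2 := by
  let π : Equiv.Perm F := (Equiv.inv F).trans (Equiv.swap 0 1)
  rw [← Equiv.sum_comp π (fun x => (φ x - φ (chainPerm γ⁻¹ (inv_ne_zero hγ) x)) ^ 2)]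
  apply Finset.sum_congr rfl
  intro y _
  by_cases h0 : y = 0
  · subst h0
    simp [π, chainPerm_apply, hγ]
  by_cases h1 : y = 1
  · subst h1
    simp [π, chainPerm_apply]
  have hπ : π y = y⁻¹ := by
    simp only [π, Equiv.trans_apply, Equiv.inv_apply]
    exact Equiv.swap_apply_of_ne_of_ne (inv_ne_zero h0) (by simpa using h1)
  have h2 : 1 - y ≠ 0 := sub_ne_zero.mpr (Ne.symm h1)
  have h3 : y⁻¹ ≠ 1 := by simpa using h1
  rw [hπ, chainPerm_apply, if_neg h0, if_neg (mul_ne_zero h2 hγ), if_neg h3]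
  congr 3
  have h4 : y⁻¹ - 1 ≠ 0 := sub_ne_zero.mpr h3
  have h5 : y⁻¹ - 1 = (1 - y) / y := by field_simp
  rw [h5]
  field_simp

lemma transfer_poincare (p : ℕ) [Fact p.Prime] (γ : ZMod p) (hγ : γ ≠ 0) (K : ℝ)
    (hK : ∀ (f : ZMod p → ℝ) (S : ℝ), ∑ y, (f y - f ((1 - y) * γ)) ^ 2 ≤ S →
      ∑ y, (f y - f ((1 - y) * γ⁻¹)) ^ 2 ≤ S → ∑ y, (f y - (∑ z, f z) / p) ^ 2 ≤ K * S)
    (φ : ZMod p → ℝ) (hφ0 : φ 0 = 0) (hφ : ∑ x, φ x = 0) :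
    ∑ x, φ x ^ 2 ≤ K * (∑ x, (φ x - φ (chainPerm γ hγ x)) ^ 2 +
      ∑ x, (φ x - φ (chainPerm γ⁻¹ (inv_ne_zero hγ) x)) ^ 2) := by
  have hp1 : (1 : ℝ) ≤ p := by exact_mod_cast (Fact.out : p.Prime).one_lt.le
  set f : ZMod p → ℝ := fun y => if y = 0 then φ 1 else φ y⁻¹ with hf
  have t1 := transfer_sum γ hγ φ
  have t2 := transfer_sum γ⁻¹ (inv_ne_zero hγ) φ
  simp only [inv_inv] at t2
  have n1 : 0 ≤ ∑ x, (φ x - φ (chainPerm γ hγ x)) ^ 2 := Finset.sum_nonneg fun _ _ => sq_nonneg _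
  have n2 : 0 ≤ ∑ x, (φ x - φ (chainPerm γ⁻¹ (inv_ne_zero hγ) x)) ^ 2 :=
    Finset.sum_nonneg fun _ _ => sq_nonneg _
  have key := hK f _ (by
      show ∑ y, (f y - f ((1 - y) * γ)) ^ 2 ≤ ∑ x, (φ x - φ (chainPerm γ hγ x)) ^ 2 +
        ∑ x, (φ x - φ (chainPerm γ⁻¹ (inv_ne_zero hγ) x)) ^ 2
      simp only [hf]
      rw [t1]; linarith) (by
      simp only [hf]
      rw [t2]; linarith)
  refine le_trans ?_ key
  set μ := (∑ z, f z) / p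
  have e1 : ∑ y, (φ y⁻¹ - μ) ^ 2 = ∑ x, φ x ^ 2 + p * μ ^ 2 := by
    rw [show (∑ y, (φ y⁻¹ - μ) ^ 2) = ∑ x, (φ x - μ) ^ 2 from
      Equiv.sum_comp (Equiv.inv (ZMod p)) (fun x => (φ x - μ) ^ 2)]
    have : ∀ x, (φ x - μ) ^ 2 = φ x ^ 2 - 2 * μ * φ x + μ ^ 2 := fun x => by ring
    simp_rw [this]
    rw [Finset.sum_add_distrib, Finset.sum_sub_distrib, ← Finset.mul_sum, hφ, Finset.sum_const,
      Finset.card_univ, ZMod.card, nsmul_eq_mul]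
    ring
  have e2 : ∑ y, ((φ y⁻¹ - μ) ^ 2 - if y = 0 then μ ^ 2 else 0) ≤ ∑ y, (f y - μ) ^ 2 := by
    apply Finset.sum_le_sum
    intro y _
    by_cases h0 : y = 0
    · subst h0
      simp only [inv_zero, hφ0, if_true]
      nlinarith [sq_nonneg (f 0 - μ)]
    · simp [hf, h0]
  rw [Finset.sum_sub_distrib, e1, Finset.sum_ite_eq' Finset.univ (0 : ZMod p)] at e2
  simp only [Finset.mem_univ, if_true] at e2
  nlinarith [sq_nonneg μ]

lemma contraction {X : Type*} [Fintype X] (σ ρ : Equiv.Perm X) (φ : X → ℝ) :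
    ∑ z, (1 / 2 * φ z + 1 / 4 * φ (σ.symm z) + 1 / 4 * φ (ρ.symm z)) ^ 2 ≤
      ∑ x, φ x ^ 2 - 1 / 8 * (∑ x, (φ x - φ (σ x)) ^ 2 + ∑ x, (φ x - φ (ρ x)) ^ 2) := by
  have hpt : ∀ z, (1 / 2 * φ z + 1 / 4 * φ (σ.symm z) + 1 / 4 * φ (ρ.symm z)) ^ 2 ≤
      1 / 2 * φ z ^ 2 + 1 / 4 * φ (σ.symm z) ^ 2 + 1 / 4 * φ (ρ.symm z) ^ 2
      - 1 / 8 * (φ (σ.symm z) - φ z) ^ 2 - 1 / 8 * (φ (ρ.symm z) - φ z) ^ 2 := by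
    intro z
    nlinarith [sq_nonneg (φ (σ.symm z) - φ (ρ.symm z))]
  refine (Finset.sum_le_sum fun z _ => hpt z).trans (le_of_eq ?_)
  simp only [Finset.sum_sub_distrib, Finset.sum_add_distrib, ← Finset.mul_sum]
  rw [Equiv.sum_comp σ.symm (fun z => φ z ^ 2), Equiv.sum_comp ρ.symm (fun z => φ z ^ 2),
    ← Equiv.sum_comp σ (fun z => (φ (σ.symm z) - φ z) ^ 2),
    ← Equiv.sum_comp ρ (fun z => (φ (ρ.symm z) - φ z) ^ 2)]
  simp only [Equiv.symm_apply_apply]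
  ring

lemma step_toReal {X : Type*} [Fintype X] [DecidableEq X] (σ ρ : Equiv.Perm X) (μ : PMF X) (z : X) :
    ((μ.bind (fun x => PMF.map (fun b : Bool × Bool => if b.1 then x else if b.2 then σ x else ρ x)
      (PMF.uniformOfFintype (Bool × Bool)))) z).toReal =
    1 / 2 * (μ z).toReal + 1 / 4 * (μ (σ.symm z)).toReal + 1 / 4 * (μ (ρ.symm z)).toReal := by
  rw [PMF.bind_apply, tsum_fintype, ENNReal.toReal_sum (fun x _ =>
    ENNReal.mul_ne_top (PMF.apply_ne_top _ _) (PMF.apply_ne_top _ _))]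
  have hst : ∀ x, ((PMF.map (fun b : Bool × Bool => if b.1 then x else if b.2 then σ x else ρ x)
      (PMF.uniformOfFintype (Bool × Bool))) z).toReal =
      (if x = z then 1 / 2 else 0) + (if x = σ.symm z then 1 / 4 else 0)
        + (if x = ρ.symm z then 1 / 4 else 0) := by
    intro x
    have c1 : (z = x) ↔ (x = z) := eq_comm
    have c2 : (z = σ x) ↔ (x = σ.symm z) := by rw [Equiv.eq_symm_apply]; exact eq_comm
    have c3 : (z = ρ x) ↔ (x = ρ.symm z) := by rw [Equiv.eq_symm_apply]; exact eq_comm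
    rw [PMF.map_apply, tsum_fintype, ENNReal.toReal_sum (by
      intro b _
      split_ifs <;> first | exact PMF.apply_ne_top _ _ | simp)]
    simp only [Fintype.sum_prod_type, Fintype.sum_bool, PMF.uniformOfFintype_apply, if_true,
      Bool.false_eq_true, if_false, c1, c2, c3]
    have h4 : ((Fintype.card (Bool × Bool) : ENNReal)⁻¹).toReal = 1 / 4 := by
      simp
    simp only [apply_ite ENNReal.toReal, h4, ENNReal.toReal_zero]
    split_ifs <;> norm_num
  simp_rw [ENNReal.toReal_mul, hst, mul_add, mul_ite, mul_zero]
  rw [Finset.sum_add_distrib, Finset.sum_add_distrib]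
  simp only [Finset.sum_ite_eq', Finset.mem_univ, if_true]
  ring

lemma chain_decay (p : ℕ) [Fact p.Prime] (γ : ZMod p) (hγ : γ ≠ 0) (K : ℝ) (hK0 : 1 ≤ K)
    (hK : ∀ φ : ZMod p → ℝ, φ 0 = 0 → ∑ x, φ x = 0 →
      ∑ x, φ x ^ 2 ≤ K * (∑ x, (φ x - φ (chainPerm γ hγ x)) ^ 2 +
      ∑ x, (φ x - φ (chainPerm γ⁻¹ (inv_ne_zero hγ) x)) ^ 2))
    (X0 : ZMod p) (hX0 : X0 ≠ 0) (step : ZMod p → PMF (ZMod p))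
    (hstep : step = fun x => PMF.map (fun b : Bool × Bool => if b.1 then x else
      if b.2 then chainPerm γ hγ x else chainPerm γ⁻¹ (inv_ne_zero hγ) x)
      (PMF.uniformOfFintype (Bool × Bool))) (n : ℕ)
    (A : Finset (ZMod p)) (hA : ∀ x ∈ A, x ≠ 0) :
    |(∑ x ∈ A, (walkDist step X0 n x).toReal) - (A.card : ℝ) / ((p : ℝ) - 1)| ≤ 1 ∧
    |(∑ x ∈ A, (walkDist step X0 n x).toReal) - (A.card : ℝ) / ((p : ℝ) - 1)| ^ 2
      ≤ p * Real.exp (-(n / (8 * K))) := by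
  have hp2 : 2 ≤ p := (Fact.out : p.Prime).two_le
  have hp1 : (1 : ℝ) ≤ (p : ℝ) - 1 := by
    have : (2 : ℝ) ≤ p := by exact_mod_cast hp2
    linarith
  set σ := chainPerm γ hγ with hσ
  set ρ := chainPerm γ⁻¹ (inv_ne_zero hγ) with hρ
  have hσ0 : σ.symm 0 = 0 := by
    rw [Equiv.symm_apply_eq, hσ, chainPerm_apply]; simp
  have hρ0 : ρ.symm 0 = 0 := by
    rw [Equiv.symm_apply_eq, hρ, chainPerm_apply]; simp
  let m : ℕ → ZMod p → ℝ := fun n x => (walkDist step X0 n x).toReal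
  have hm1 : ∀ n, ∑ x, m n x = 1 := by
    intro n
    have := (walkDist step X0 n).tsum_coe
    rw [tsum_fintype] at this
    simp only [m]
    rw [← ENNReal.toReal_sum (fun x _ => PMF.apply_ne_top _ _), this]; simp
  have hrec : ∀ n z, m (n + 1) z = 1 / 2 * m n z + 1 / 4 * m n (σ.symm z) + 1 / 4 * m n (ρ.symm z) := by
    intro n z
    have : walkDist step X0 (n + 1) = (walkDist step X0 n).bind step := by
      simp only [walkDist, Function.iterate_succ_apply']
    simp only [m]
    rw [this, hstep]
    exact step_toReal σ ρ _ z
  have hm0 : ∀ n, m n 0 = 0 := by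
    intro n
    induction n with
    | zero => simp [m, walkDist, PMF.pure_apply, hX0.symm]
    | succ n ih => rw [hrec, hσ0, hρ0, ih]; ring
  have hmnn : ∀ n x, 0 ≤ m n x := fun n x => ENNReal.toReal_nonneg
  let φ : ℕ → ZMod p → ℝ := fun n x => m n x - if x = 0 then 0 else 1 / ((p : ℝ) - 1)
  have hφ0 : ∀ n, φ n 0 = 0 := by intro n; simp [φ, hm0]
  have hunif : ∑ x : ZMod p, (if x = 0 then 0 else 1 / ((p : ℝ) - 1)) = 1 := by
    have : ∀ x : ZMod p, (if x = 0 then 0 else 1 / ((p : ℝ) - 1)) =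
        1 / ((p : ℝ) - 1) - if x = 0 then 1 / ((p : ℝ) - 1) else 0 := by
      intro x; split_ifs <;> ring
    simp_rw [this]
    rw [Finset.sum_sub_distrib, Finset.sum_ite_eq', Finset.sum_const, Finset.card_univ, ZMod.card,
      nsmul_eq_mul, if_pos (Finset.mem_univ _)]
    have : (p : ℝ) - 1 ≠ 0 := by linarith
    field_simp
  have hφs : ∀ n, ∑ x, φ n x = 0 := by
    intro n
    simp only [φ]
    rw [Finset.sum_sub_distrib, hm1, hunif, sub_self]
  have hφrec : ∀ n z, φ (n + 1) z = 1 / 2 * φ n z + 1 / 4 * φ n (σ.symm z) + 1 / 4 * φ n (ρ.symm z) := by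
    intro n z
    by_cases hz : z = 0
    · subst hz; rw [hσ0, hρ0, hφ0, hφ0]; ring
    · have h1 : σ.symm z ≠ 0 := fun h => hz (by rw [← hσ0] at h; exact σ.symm.injective h)
      have h2 : ρ.symm z ≠ 0 := fun h => hz (by rw [← hρ0] at h; exact ρ.symm.injective h)
      simp only [φ, hz, h1, h2, if_false]
      rw [hrec]; ring
  have hE : ∀ n, ∑ x, φ (n + 1) x ^ 2 ≤ Real.exp (-(1 / (8 * K))) * ∑ x, φ n x ^ 2 := by
    intro n
    have h1 := contraction σ ρ (φ n)
    have h2 := hK (φ n) (hφ0 n) (hφs n)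
    have h3 : ∑ x, φ (n + 1) x ^ 2 = ∑ z, (1 / 2 * φ n z + 1 / 4 * φ n (σ.symm z) + 1 / 4 * φ n (ρ.symm z)) ^ 2 :=
      Finset.sum_congr rfl fun z _ => by rw [hφrec]
    rw [h3]
    refine h1.trans ?_
    set E := ∑ x, φ n x ^ 2
    set S := ∑ x, (φ n x - φ n (σ x)) ^ 2 + ∑ x, (φ n x - φ n (ρ x)) ^ 2
    have hE0 : 0 ≤ E := Finset.sum_nonneg fun _ _ => sq_nonneg _
    have hKpos : 0 < K := by linarith
    have h4 : 1 / (8 * K) * E ≤ 1 / 8 * S := by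
      rw [div_mul_eq_mul_div, div_le_iff₀ (by positivity)]
      linarith
    have h5 := Real.add_one_le_exp (-(1 / (8 * K)))
    nlinarith
  have hEn : ∀ n : ℕ, ∑ x, φ n x ^ 2 ≤ Real.exp (-(n / (8 * K))) := by
    intro n
    induction n with
    | zero =>
      simp only [Nat.cast_zero, zero_div, neg_zero, Real.exp_zero]
      have hb : ∀ x, φ 0 x ^ 2 ≤ m 0 x - 2 * (1 / ((p : ℝ) - 1)) * m 0 x + 1 / ((p : ℝ) - 1) * (if x = 0 then 0 else 1 / ((p : ℝ) - 1)) := by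
        intro x
        by_cases hx : x = 0
        · subst hx; rw [hφ0, hm0]; simp
        · have hx01 : m 0 x ^ 2 = m 0 x := by
            simp only [m, walkDist, Function.iterate_zero, id, PMF.pure_apply]
            split_ifs <;> simp
          simp only [φ, hx, if_false]
          nlinarith
      refine (Finset.sum_le_sum fun x _ => hb x).trans ?_
      rw [Finset.sum_add_distrib, Finset.sum_sub_distrib, ← Finset.mul_sum, ← Finset.mul_sum, hm1, hunif]
      have : 0 ≤ 1 / ((p : ℝ) - 1) := by positivity
      linarith
    | succ n ih =>
      refine (hE n).trans ?_
      have : Real.exp (-(((n + 1 : ℕ) : ℝ) / (8 * K))) = Real.exp (-(1 / (8 * K))) * Real.exp (-(n / (8 * K))) := by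
        rw [← Real.exp_add]; congr 1; push_cast; ring
      rw [this]
      gcongr
  have hsum : (∑ x ∈ A, (walkDist step X0 n x).toReal) - (A.card : ℝ) / ((p : ℝ) - 1) = ∑ x ∈ A, φ n x := by
    simp only [φ]
    rw [Finset.sum_sub_distrib]
    congr 1
    rw [Finset.sum_congr rfl (fun x hx => if_neg (hA x hx)), Finset.sum_const, nsmul_eq_mul]
    ring
  constructor
  · have a1 : ∑ x ∈ A, (walkDist step X0 n x).toReal ≤ 1 := by
      rw [← hm1 n]
      exact Finset.sum_le_sum_of_subset_of_nonneg (Finset.subset_univ _) fun x _ _ => hmnn n x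
    have a2 : 0 ≤ ∑ x ∈ A, (walkDist step X0 n x).toReal := Finset.sum_nonneg fun x _ => hmnn n x
    have a3 : 0 ≤ (A.card : ℝ) / ((p : ℝ) - 1) := by positivity
    have a4 : (A.card : ℝ) / ((p : ℝ) - 1) ≤ 1 := by
      rw [div_le_one (by linarith)]
      have hsub : A ⊆ Finset.univ.erase 0 := fun x hx => Finset.mem_erase.mpr ⟨hA x hx, Finset.mem_univ _⟩
      have := Finset.card_le_card hsub
      rw [Finset.card_erase_of_mem (Finset.mem_univ _), Finset.card_univ, ZMod.card] at this
      have h' : A.card + 1 ≤ p := by omega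
      have : (A.card : ℝ) + 1 ≤ p := by exact_mod_cast h'
      linarith
    rw [abs_le]; constructor <;> linarith
  · rw [hsum, sq_abs]
    have cs := sq_sum_le_card_mul_sum_sq (s := A) (f := φ n)
    refine cs.trans ?_
    have c1 : (A.card : ℝ) ≤ p := by
      have := Finset.card_le_univ A
      rw [ZMod.card] at this
      exact_mod_cast this
    have c2 : ∑ x ∈ A, φ n x ^ 2 ≤ ∑ x, φ n x ^ 2 :=
      Finset.sum_le_sum_of_subset_of_nonneg (Finset.subset_univ _) fun x _ _ => sq_nonneg _
    have c3 : 0 ≤ ∑ x ∈ A, φ n x ^ 2 := Finset.sum_nonneg fun _ _ => sq_nonneg _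
    exact mul_le_mul c1 (c2.trans (hEn n)) c3 (by positivity)

lemma nums (u : ℕ) (hu : 1 ≤ u) : ∃ L M N : ℕ, u * 2 ^ (u ^ 2) ≤ M ∧ u ^ 3 * 2 ≤ M ∧
    (2 * 4 ^ u + 1) ^ u * u ≤ N ∧ u + N * u ^ 3 ≤ L ∧ 2 * N ≤ 2 ^ (6 * u ^ 2) ∧
    16 * (M ^ 2 * (L * (4 * L + 6) ^ 2)) * u ^ 3 ≤ 2 ^ (52 * u ^ 2) ∧
    1 ≤ M ^ 2 * (L * (4 * L + 6) ^ 2) := by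
  obtain ⟨Q, hQ⟩ : ∃ Q, Q = 2 ^ (u ^ 2) := ⟨_, rfl⟩
  have huu : u ≤ u ^ 2 := by nlinarith
  have hQ2 : 2 ≤ Q := by
    rw [hQ]
    calc 2 = 2 ^ 1 := rfl
      _ ≤ 2 ^ (u ^ 2) := Nat.pow_le_pow_right (by norm_num) (by omega)
  have hQu : u ≤ Q := by
    rw [hQ]
    exact (Nat.lt_two_pow_self).le.trans (Nat.pow_le_pow_right (by norm_num) huu)
  have hQ1 : 1 ≤ Q := by omega
  have hQp : ∀ k, 2 ^ (k * u ^ 2) = Q ^ k := by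
    intro k; rw [hQ, ← pow_mul, mul_comm]
  set N := (2 * 4 ^ u + 1) ^ u * u with hN
  set L := u + N * u ^ 3 with hL
  set M := u ^ 3 * (2 * Q) with hM
  have hbase : 2 * 4 ^ u + 1 ≤ 2 ^ (4 * u) := by
    have h4 : 4 ≤ 4 ^ u := by
      calc 4 = 4 ^ 1 := rfl
        _ ≤ 4 ^ u := Nat.pow_le_pow_right (by norm_num) hu
    have : 2 ^ (4 * u) = 4 ^ u * 4 ^ u := by
      rw [← mul_pow, pow_mul]; norm_num
    rw [this]; nlinarith
  have hNQ : N ≤ Q ^ 5 := by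
    have h1 : (2 * 4 ^ u + 1) ^ u ≤ Q ^ 4 := by
      refine (Nat.pow_le_pow_left hbase u).trans (le_of_eq ?_)
      rw [← hQp, ← pow_mul]; ring_nf
    calc N ≤ Q ^ 4 * Q := Nat.mul_le_mul h1 hQu
      _ = Q ^ 5 := by ring
  have hu3 : u ^ 3 ≤ Q ^ 3 := Nat.pow_le_pow_left hQu 3
  have hLQ : L ≤ Q ^ 9 := by
    have h1 : N * u ^ 3 ≤ Q ^ 8 := (Nat.mul_le_mul hNQ hu3).trans (le_of_eq (by ring))
    have h2 : u ≤ Q ^ 8 := hQu.trans (Nat.le_self_pow (by norm_num) Q)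
    calc L ≤ 2 * Q ^ 8 := by omega
      _ ≤ Q * Q ^ 8 := Nat.mul_le_mul_right _ hQ2
      _ = Q ^ 9 := by ring
  have hL1 : 1 ≤ L := by omega
  have h16 : 16 ≤ Q ^ 4 := (Nat.pow_le_pow_left hQ2 4)
  have h4L : 4 * L + 6 ≤ Q ^ 13 := by
    calc 4 * L + 6 ≤ 16 * L := by omega
      _ ≤ Q ^ 4 * Q ^ 9 := Nat.mul_le_mul h16 hLQ
      _ = Q ^ 13 := by ring
  have hMQ : M ≤ Q ^ 5 := by
    calc M ≤ Q ^ 3 * (Q * Q) := Nat.mul_le_mul hu3 (Nat.mul_le_mul_right _ hQ2)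
      _ = Q ^ 5 := by ring
  have hu31 : u ≤ u ^ 3 := Nat.le_self_pow (by norm_num) u
  have hM1 : 1 ≤ M := Nat.mul_pos (by omega) (by omega)
  refine ⟨L, M, N, ?_, ?_, le_rfl, le_rfl, ?_, ?_, ?_⟩
  · rw [← hQ]
    exact Nat.mul_le_mul hu31 (by omega)
  · exact Nat.mul_le_mul_left _ (by omega)
  · rw [hQp]
    calc 2 * N ≤ Q * Q ^ 5 := Nat.mul_le_mul hQ2 hNQ
      _ = Q ^ 6 := by ring
  · rw [hQp]
    calc 16 * (M ^ 2 * (L * (4 * L + 6) ^ 2)) * u ^ 3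
        ≤ Q ^ 4 * ((Q ^ 5) ^ 2 * (Q ^ 9 * (Q ^ 13) ^ 2)) * Q ^ 3 := by gcongr
      _ = Q ^ 52 := by ring
  · exact Nat.mul_pos (by positivity) (Nat.mul_pos hL1 (by positivity))

lemma asymp : ∃ l0 : ℝ, 1 ≤ l0 ∧ ∀ l : ℝ, l0 ≤ l → 1 < l →
    52 * (2 * l ^ (1 / 3 : ℝ) + 1) ^ 2 ≤ l / Real.log l := by
  have h := (isLittleO_log_rpow_atTop (show (0 : ℝ) < 1 / 3 by norm_num)).bound
    (show (0 : ℝ) < 1 / 468 by norm_num)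
  obtain ⟨a, ha⟩ := Filter.eventually_atTop.mp h
  refine ⟨max a 1, le_max_right _ _, fun l hl hl1 => ?_⟩
  have h1 := ha l ((le_max_left _ _).trans hl)
  have hlog : 0 < Real.log l := Real.log_pos hl1
  set t := l ^ (1 / 3 : ℝ) with ht
  have ht3 : t ^ 3 = l := by
    rw [ht, ← Real.rpow_natCast, ← Real.rpow_mul (by linarith)]; norm_num
  have ht1 : 1 ≤ t := Real.one_le_rpow hl1.le (by norm_num)
  rw [Real.norm_of_nonneg hlog.le, Real.norm_of_nonneg (by linarith)] at h1
  rw [le_div_iff₀ hlog]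
  have h2 : 52 * (2 * t + 1) ^ 2 ≤ 468 * t ^ 2 := by nlinarith
  calc 52 * (2 * t + 1) ^ 2 * Real.log l ≤ (468 * t ^ 2) * (1 / 468 * t) := by gcongr
    _ = l := by rw [← ht3]; ring

lemma two_pow_le_exp (k : ℕ) : (2 : ℝ) ^ k ≤ Real.exp k := by
  have h := Real.add_one_le_exp (1 : ℝ)
  calc (2 : ℝ) ^ k ≤ (Real.exp 1) ^ k := by gcongr; linarith
    _ = Real.exp k := by rw [← Real.exp_nat_mul, mul_one]

/-- choice of the scale `u` -/
lemma exists_u (l : ℝ) (hl : 1 < l) (h : 52 * (2 * l ^ (1 / 3 : ℝ) + 1) ^ 2 ≤ l / Real.log l) :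
    ∃ u : ℕ, 1 ≤ u ∧ Real.exp l < 2 ^ (u ^ 3) ∧ l ≤ (u : ℝ) ^ 3 ∧
      (2 : ℝ) ^ (52 * u ^ 2) ≤ Real.exp (l / Real.log l) := by
  set t := l ^ (1 / 3 : ℝ) with ht
  have ht3 : t ^ 3 = l := by
    rw [ht, ← Real.rpow_natCast, ← Real.rpow_mul (by linarith)]; norm_num
  have ht1 : 1 ≤ t := Real.one_le_rpow hl.le (by norm_num)
  have hlt := Nat.lt_floor_add_one (2 * t)
  have hle := Nat.floor_le (show 0 ≤ 2 * t by linarith)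
  set u := ⌊2 * t⌋₊ + 1 with hu
  have hu1 : 2 * t < (u : ℝ) := by rw [hu]; push_cast; exact hlt
  have hu2 : (u : ℝ) ≤ 2 * t + 1 := by rw [hu]; push_cast; linarith
  have hu3 : 8 * l ≤ (u : ℝ) ^ 3 := by
    calc 8 * l = (2 * t) ^ 3 := by rw [← ht3]; ring
      _ ≤ (u : ℝ) ^ 3 := by gcongr
  refine ⟨u, by omega, ?_, by linarith, ?_⟩
  · have : (2 : ℝ) ^ (u ^ 3) = Real.exp (((u ^ 3 : ℕ) : ℝ) * Real.log 2) := by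
      rw [Real.exp_nat_mul, Real.exp_log (by norm_num)]
    rw [this]
    apply Real.exp_lt_exp.mpr
    push_cast
    nlinarith [Real.log_two_gt_d9]
  · refine (two_pow_le_exp _).trans (Real.exp_le_exp.mpr (le_trans ?_ h))
    push_cast
    gcongr

end MixingProof

theorem stmt0 :
    ∃ C1 C2 C3 : ℝ, 0 < C1 ∧ 0 < C2 ∧ 0 < C3 ∧
      ∀ (p : ℕ) [Fact p.Prime], 16 ≤ p →
        ∀ γ : ZMod p, γ ≠ 0 →
          Real.exp (C1 * Real.log p / Real.log (Real.log p)) ≤ orderOf γ →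
          ∀ X0 : ZMod p, X0 ≠ 0 →
            ∀ step : ZMod p → PMF (ZMod p),
              step = (fun x => PMF.map
                (fun b : Bool × Bool =>
                  if b.1 then x
                  else if b.2 then (if x = 1 then 1 else x / (x - 1)) * γ
                  else (if x = 1 then 1 else x / (x - 1)) * γ⁻¹)
                (PMF.uniformOfFintype (Bool × Bool))) →
              ∀ c : ℝ, 0 < c →
                ∀ n : ℕ, c * Real.exp (Real.log p / Real.log (Real.log p)) ≤ n →
                  ∀ A : Finset (ZMod p), (∀ x ∈ A, x ≠ 0) →
                    (1/2) * |(∑ x ∈ A, (walkDist step X0 n x).toReal)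
                        - (A.card : ℝ) / ((p : ℝ) - 1)| ≤ C2 * Real.exp (-C3 * c) := by
  obtain ⟨l0, hl0, hasymp⟩ := MixingProof.asymp
  have hlogl0 : 0 ≤ Real.log l0 := Real.log_nonneg hl0
  refine ⟨Real.log l0 + 1, Real.exp 1, 1 / 2, by linarith, Real.exp_pos _, by norm_num, ?_⟩
  intro p _ hp16 γ hγ hord X0 hX0 step hstep c hc n hn A hA
  have hpR : (16 : ℝ) ≤ p := by exact_mod_cast hp16
  have hppos : (0 : ℝ) < p := by linarith
  set l := Real.log p with hl
  have hpl : Real.exp l = p := Real.exp_log hppos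
  have hl27 : 2.7725 < l := by
    have h16 : Real.log 16 = 4 * Real.log 2 := by
      rw [show (16 : ℝ) = 2 ^ 4 by norm_num, Real.log_pow]; norm_num
    have := Real.log_le_log (by norm_num) hpR
    have := Real.log_two_gt_d9
    linarith
  have hloglog : 1 < Real.log l := by
    rw [Real.lt_log_iff_exp_lt (by linarith)]
    have := Real.exp_one_lt_d9
    linarith
  have hordlt : (orderOf γ : ℝ) < p := by
    have h1 : orderOf γ ∣ p - 1 := orderOf_dvd_of_pow_eq_one (ZMod.pow_card_sub_one_eq_one hγ)
    have h2 := Nat.le_of_dvd (by omega) h1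
    have h3 : orderOf γ < p := by omega
    exact_mod_cast h3
  have hll0 : l0 ≤ l := by
    by_contra hlt
    push Not at hlt
    have h1 : Real.log l ≤ Real.log l0 + 1 := by
      have := Real.log_le_log (by linarith) hlt.le
      linarith
    have h2 : l ≤ (Real.log l0 + 1) * l / Real.log l := by
      rw [le_div_iff₀ (by linarith)]
      nlinarith
    have h3 := Real.exp_le_exp.mpr h2
    linarith
  obtain ⟨u, hu1, hpu, hlu, hexp⟩ := MixingProof.exists_u l (by linarith) (hasymp l hll0 (by linarith))
  obtain ⟨L, M, N, hM1, hM2, hN, hL, hN2, hK, hK1⟩ := MixingProof.nums u hu1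
  have hpu' : p < 2 ^ (u ^ 3) := by
    rw [hpl] at hpu
    exact_mod_cast hpu
  have hord2 : 2 * N < orderOf γ := by
    have h1 : (2 * N : ℕ) < 2 ^ (52 * u ^ 2) := by
      refine lt_of_le_of_lt hN2 (Nat.pow_lt_pow_right (by norm_num) ?_)
      have : 0 < u ^ 2 := by positivity
      omega
    have h2 : ((2 * N : ℕ) : ℝ) < 2 ^ (52 * u ^ 2) := by exact_mod_cast h1
    have h3 : Real.exp (l / Real.log l) ≤ Real.exp ((Real.log l0 + 1) * l / Real.log l) := by
      apply Real.exp_le_exp.mpr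
      have : 0 < l := by linarith
      have : 0 < Real.log l := by linarith
      gcongr
      nlinarith
    have h4 : ((2 * N : ℕ) : ℝ) < orderOf γ := by linarith
    exact_mod_cast h4
  set K : ℝ := (M : ℝ) ^ 2 * (L * (4 * L + 6) ^ 2) with hKdef
  have hK1' : 1 ≤ K := by
    rw [hKdef]; exact_mod_cast hK1
  have hKl : 16 * K * l ≤ Real.exp (l / Real.log l) := by
    have h1 : 16 * K * (u : ℝ) ^ 3 ≤ 2 ^ (52 * u ^ 2) := by
      rw [hKdef]; exact_mod_cast hK
    have h2 : 16 * K * l ≤ 16 * K * (u : ℝ) ^ 3 := by gcongr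
    linarith
  have hpoin := MixingProof.poincare p u hu1 hpu' L M N hM1 hM2 hN hL γ hγ hord2
  have htr := MixingProof.transfer_poincare p γ hγ K hpoin
  obtain ⟨hd1, hd2⟩ := MixingProof.chain_decay p γ hγ K hK1' htr X0 hX0 step hstep n A hA
  set D := |(∑ x ∈ A, (walkDist step X0 n x).toReal) - (A.card : ℝ) / ((p : ℝ) - 1)| with hD
  have hD0 : 0 ≤ D := abs_nonneg _
  rw [← Real.exp_add]
  by_cases hc1 : c < 1
  · have : (1 : ℝ) ≤ Real.exp (1 + -(1 / 2) * c) := Real.one_le_exp (by linarith)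
    linarith
  · push Not at hc1
    have hKpos : 0 < K := by linarith
    have hn2 : 2 * c * l ≤ n / (8 * K) := by
      rw [le_div_iff₀ (by positivity)]
      have : c * (16 * K * l) ≤ c * Real.exp (l / Real.log l) := by gcongr
      linarith
    have hD2 : D ^ 2 ≤ Real.exp (-(1 / 2) * c) ^ 2 := by
      refine hd2.trans ?_
      rw [← hpl, ← Real.exp_add, ← Real.exp_nat_mul]
      apply Real.exp_le_exp.mpr
      push_cast
      nlinarith
    have hD3 : D ≤ Real.exp (-(1 / 2) * c) :=
      (le_abs_self D).trans (abs_le_of_sq_le_sq hD2 (Real.exp_pos _).le)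
    have : Real.exp (-(1 / 2) * c) ≤ Real.exp (1 + -(1 / 2) * c) :=
      Real.exp_le_exp.mpr (by linarith)
    linarith
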